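/- Fix a trading network market with real-valued (finite) valuations and define the Lyapunov function L(p) = Σ_{i ∈ I} max_{Ψ ⊆ Ω_i} (v^i(Ψ) − Σ_{ω ∈ Ψ} χ^i_ω p_ω) for p ∈ ℝ^Ω. If p* is a vector of competitive equilibrium prices (i.e. (p*, Φ) is a competitive equilibrium for some Φ ⊆ Ω), then L(p*) = w(I). If p ∈ ℝ^Ω is such that no Φ ⊆ Ω makes (p, Φ) a competitive equilibrium, then L(p) > w(I). -/

import Mathlib

/-!
Payments cancel: each trade is paid by its buyer and received by its seller, so for every set of
trades `Φ` the sum over agents of the utilities of `Φ ∩ Ω_i` equals the total valuation of `Φ`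
(`sum_utility`), whatever the prices. Each such utility is at most the agent's indirect utility, so
the total valuation of every `Φ` is at most `L(p)`, with equality exactly when every agent demands
`Φ ∩ Ω_i`, i.e. when `(p, Φ)` is a competitive equilibrium (`sum_val_le_lyap`,
`sum_val_eq_lyap_iff`). Since `w(I)` is the maximum of the total valuation over the finitely many
`Φ`, both claims follow.
-/

open Finset

variable {I Ω : Type*} [Fintype I] [DecidableEq I] [Fintype Ω] [DecidableEq Ω]

/-- The trades involving agent `i`. -/
def tradesOf (b s : Ω → I) (i : I) : Finset Ω :=
  Finset.univ.filter fun ω => b ω = i ∨ s ω = i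

/-- `χ^i_ω`: `1` if `i` buys `ω`, `-1` if `i` sells `ω`, `0` otherwise. -/
def chi (b s : Ω → I) (i : I) (ω : Ω) : ℝ :=
  if b ω = i then 1 else if s ω = i then -1 else 0

/-- Quasi-linear utility of agent `i` for bundle `Ψ` at prices `p`. -/
def utility (b s : Ω → I) (v : I → Finset Ω → ℝ) (i : I)
    (Ψ : Finset Ω) (p : Ω → ℝ) : ℝ :=
  v i Ψ - ∑ ω ∈ Ψ, chi b s i ω * p ω

/-- Demand of agent `i` at prices `p`: utility-maximizing bundles `Ψ ⊆ Ω_i`. -/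
def demand (b s : Ω → I) (v : I → Finset Ω → ℝ) (i : I)
    (p : Ω → ℝ) : Set (Finset Ω) :=
  {Ψ | Ψ ⊆ tradesOf b s i ∧
    ∀ Ψ' ⊆ tradesOf b s i, utility b s v i Ψ' p ≤ utility b s v i Ψ p}

/-- A market arrangement `(p, Φ)` is a competitive equilibrium. -/
def IsCompetitiveEquilibrium (b s : Ω → I) (v : I → Finset Ω → ℝ)
    (p : Ω → ℝ) (Φ : Finset Ω) : Prop :=
  ∀ i : I, Φ ∩ tradesOf b s i ∈ demand b s v i p

/-- Trades whose buyer and seller both lie in coalition `C`. -/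
def coalitionTrades (b s : Ω → I) (C : Finset I) : Finset Ω :=
  Finset.univ.filter fun ω => b ω ∈ C ∧ s ω ∈ C

/-- The characteristic function `w(C)` of the cooperative market game. -/
noncomputable def coalitionValue (b s : Ω → I) (v : I → Finset Ω → ℝ)
    (C : Finset I) : ℝ :=
  (coalitionTrades b s C).powerset.sup' (Finset.powerset_nonempty _)
    fun Φ => ∑ i ∈ C, v i (Φ ∩ tradesOf b s i)

/-- The indirect-utility Lyapunov summand `L^i` of agent `i`. -/
noncomputable def LyapAgent (b s : Ω → I) (v : I → Finset Ω → ℝ) (i : I)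
    (p : Ω → ℝ) : ℝ :=
  (tradesOf b s i).powerset.sup' (Finset.powerset_nonempty _)
    (fun Ψ => v i Ψ - ∑ ω ∈ Ψ, chi b s i ω * p ω) +
  ∑ ω ∈ tradesOf b s i, chi b s i ω * p ω

/-- The Lyapunov function `L(p)`: the sum of agents' indirect utilities at prices `p`. -/
noncomputable def Lyap (b s : Ω → I) (v : I → Finset Ω → ℝ) (p : Ω → ℝ) : ℝ :=
  ∑ i, (tradesOf b s i).powerset.sup' (Finset.powerset_nonempty _)
    (fun Ψ => v i Ψ - ∑ ω ∈ Ψ, chi b s i ω * p ω)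

/-- An agent's indirect utility at prices `p`, i.e. the corresponding summand of `Lyap`. -/
noncomputable def indirectUtility (b s : Ω → I) (v : I → Finset Ω → ℝ) (i : I) (p : Ω → ℝ) : ℝ :=
  (tradesOf b s i).powerset.sup' (Finset.powerset_nonempty _) fun Ψ => utility b s v i Ψ p

lemma lyap_eq_sum_indirectUtility (b s : Ω → I) (v : I → Finset Ω → ℝ) (p : Ω → ℝ) :
    Lyap b s v p = ∑ i, indirectUtility b s v i p := rfl

lemma utility_le_indirectUtility (b s : Ω → I) (v : I → Finset Ω → ℝ) (i : I) (p : Ω → ℝ)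
    {Ψ : Finset Ω} (hΨ : Ψ ⊆ tradesOf b s i) :
    utility b s v i Ψ p ≤ indirectUtility b s v i p :=
  Finset.le_sup' (fun Ψ => utility b s v i Ψ p) (Finset.mem_powerset.2 hΨ)

lemma mem_demand_iff (b s : Ω → I) (v : I → Finset Ω → ℝ) (i : I) (p : Ω → ℝ)
    {Ψ : Finset Ω} (hΨ : Ψ ⊆ tradesOf b s i) :
    Ψ ∈ demand b s v i p ↔ utility b s v i Ψ p = indirectUtility b s v i p := by
  constructor
  · rintro ⟨-, h⟩
    exact le_antisymm (utility_le_indirectUtility b s v i p hΨ)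
      (Finset.sup'_le _ _ fun Ψ' h' => h Ψ' (Finset.mem_powerset.1 h'))
  · intro h
    exact ⟨hΨ, fun Ψ' h' => h ▸ utility_le_indirectUtility b s v i p h'⟩

lemma sum_chi (b s : Ω → I) (hbs : ∀ ω, b ω ≠ s ω) (ω : Ω) : ∑ i, chi b s i ω = 0 := by
  have h : ∀ i, chi b s i ω = (if b ω = i then 1 else 0) - (if s ω = i then 1 else 0) := by
    intro i
    have := hbs ω
    unfold chi
    split_ifs <;> simp_all
  simp [h]

/-- Payments cancel when utilities are summed over all agents. -/
lemma sum_utility (b s : Ω → I) (v : I → Finset Ω → ℝ) (hbs : ∀ ω, b ω ≠ s ω)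
    (p : Ω → ℝ) (Φ : Finset Ω) :
    ∑ i, utility b s v i (Φ ∩ tradesOf b s i) p = ∑ i, v i (Φ ∩ tradesOf b s i) := by
  -- Trades outside `Ω_i` have `χ^i_ω = 0`, so they can be added to agent `i`'s payments.
  have h : ∀ i, ∑ ω ∈ Φ ∩ tradesOf b s i, chi b s i ω * p ω = ∑ ω ∈ Φ, chi b s i ω * p ω := by
    intro i
    refine Finset.sum_subset Finset.inter_subset_left fun ω hω hn => ?_
    have : ¬ (b ω = i ∨ s ω = i) := fun h => hn (by simp [tradesOf, hω, h])
    simp_all [chi]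
  simp only [utility, h, Finset.sum_sub_distrib]
  rw [Finset.sum_comm]
  simp [← Finset.sum_mul, sum_chi b s hbs]

lemma sum_val_le_lyap (b s : Ω → I) (v : I → Finset Ω → ℝ) (hbs : ∀ ω, b ω ≠ s ω)
    (p : Ω → ℝ) (Φ : Finset Ω) :
    ∑ i, v i (Φ ∩ tradesOf b s i) ≤ Lyap b s v p := by
  rw [← sum_utility b s v hbs p, lyap_eq_sum_indirectUtility]
  exact Finset.sum_le_sum fun i _ =>
    utility_le_indirectUtility b s v i p Finset.inter_subset_right

lemma sum_val_eq_lyap_iff (b s : Ω → I) (v : I → Finset Ω → ℝ) (hbs : ∀ ω, b ω ≠ s ω)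
    (p : Ω → ℝ) (Φ : Finset Ω) :
    ∑ i, v i (Φ ∩ tradesOf b s i) = Lyap b s v p ↔ IsCompetitiveEquilibrium b s v p Φ := by
  rw [← sum_utility b s v hbs p, lyap_eq_sum_indirectUtility,
    Finset.sum_eq_sum_iff_of_le fun i _ =>
      utility_le_indirectUtility b s v i p Finset.inter_subset_right]
  simp [IsCompetitiveEquilibrium, mem_demand_iff b s v _ p Finset.inter_subset_right]

/-- The Lyapunov function equals the market value `w(I)` at competitive
equilibrium prices, and strictly exceeds it at any non-equilibrium prices. -/
theorem lyapunov_min_at_equilibrium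
    (b s : Ω → I) (v : I → Finset Ω → ℝ)
    (hbs : ∀ ω, b ω ≠ s ω) (hv0 : ∀ i, v i ∅ = 0) :
    (∀ (p : Ω → ℝ) (Φ : Finset Ω), IsCompetitiveEquilibrium b s v p Φ →
      Lyap b s v p = coalitionValue b s v Finset.univ) ∧
    (∀ p : Ω → ℝ, (¬ ∃ Φ : Finset Ω, IsCompetitiveEquilibrium b s v p Φ) →
      coalitionValue b s v Finset.univ < Lyap b s v p) := by
  constructor
  · intro p Φ h
    refine le_antisymm ?_ (Finset.sup'_le _ _ fun Φ' _ => sum_val_le_lyap b s v hbs p Φ')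
    rw [← (sum_val_eq_lyap_iff b s v hbs p Φ).2 h]
    exact Finset.le_sup' (fun Φ => ∑ i, v i (Φ ∩ tradesOf b s i))
      (by simp [coalitionTrades])
  · intro p h
    refine (Finset.sup'_lt_iff _).2 fun Φ _ => ?_
    exact (sum_val_le_lyap b s v hbs p Φ).lt_of_ne fun he =>
      h ⟨Φ, (sum_val_eq_lyap_iff b s v hbs p Φ).1 he⟩
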